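/- Let x ∈ E with ‖x‖ = 1, let w, v ∈ E, set ν := P(x) w, let c > 0 be a scalar, and let J : E → E be a linear map. Then the pair of equations P(x) v = 0 and -c • (v - ν) + J(P(x) v) = 0 holds if and only if v = 0 and ν = 0. Consequently, the equilibrium points (x, v) of the closed-loop system ẋ = P(x)v, v̇ = -c(v - ν(x)) + J(P(x)v) on the unit sphere are exactly the pairs (x, 0) with ν(x) = 0. -/

import Mathlib

/-!
The equation `ẋ = 0` removes the term `J (P(x) v)` from `v̇ = 0`, which leaves `v = P(x) w`. So at
an equilibrium `v` lies both in the kernel and in the range of `P(x)`. These intersect trivially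
because `P(x)` is symmetric: `‖v‖² = ⟪v, P(x) w⟫ = ⟪P(x) v, w⟫ = 0`.
-/

open scoped RealInnerProductSpace

/-- Orthogonal projection onto the tangent space of the unit sphere at `x`:
`P(x) v = v - ⟪x, v⟫ • x`. -/
noncomputable def sproj {F : Type*} [NormedAddCommGroup F] [InnerProductSpace ℝ F]
    (x v : F) : F :=
  v - ⟪x, v⟫ • x

theorem disjoint_ker_range_of_isSymmetric {𝕜 E : Type*} [RCLike 𝕜] [NormedAddCommGroup E]
    [InnerProductSpace 𝕜 E] {T : E →ₗ[𝕜] E} (hT : T.IsSymmetric) : Disjoint T.ker T.range :=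
  hT.orthogonal_range ▸ T.range.orthogonal_disjoint.symm

theorem apply_eq_zero_and_eq_apply_iff {R M : Type*} [Semiring R] [AddCommMonoid M] [Module R M]
    {T : M →ₗ[R] M} (hT : Disjoint T.ker T.range) {v w : M} :
    (T v = 0 ∧ v = T w) ↔ (v = 0 ∧ T w = 0) := by
  constructor
  · rintro ⟨hker, hrange⟩
    have hv : v = 0 := Submodule.disjoint_def.mp hT v hker ⟨w, hrange.symm⟩
    exact ⟨hv, hrange.symm.trans hv⟩
  · rintro ⟨rfl, hw⟩
    exact ⟨map_zero T, hw.symm⟩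

section sproj

variable {F : Type*} [NormedAddCommGroup F] [InnerProductSpace ℝ F]

theorem coe_one_sub_rankOne_self_eq_sproj (x : F) :
    ⇑(1 - InnerProductSpace.rankOne ℝ x x : F →ₗ[ℝ] F) = sproj x :=
  rfl

theorem isSymmetric_one_sub_rankOne_self (x : F) :
    (1 - InnerProductSpace.rankOne ℝ x x : F →ₗ[ℝ] F).IsSymmetric :=
  .sub .one (InnerProductSpace.isSymmetric_rankOne_self x)

theorem sproj_eq_zero_and_eq_sproj_iff {x v w : F} :
    (sproj x v = 0 ∧ v = sproj x w) ↔ (v = 0 ∧ sproj x w = 0) := by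
  simpa only [coe_one_sub_rankOne_self_eq_sproj] using apply_eq_zero_and_eq_apply_iff
    (disjoint_ker_range_of_isSymmetric (isSymmetric_one_sub_rankOne_self x))

theorem equilibrium_characterization_general (x w v : F) {c : ℝ} (hc : c ≠ 0) {J : F → F}
    (hJ : J 0 = 0) :
    (sproj x v = 0 ∧ (-c) • (v - sproj x w) + J (sproj x v) = 0) ↔
      (v = 0 ∧ sproj x w = 0) :=
  calc
    _ ↔ sproj x v = 0 ∧ v = sproj x w := and_congr_right fun hv ↦ by
      rw [hv, hJ, add_zero, smul_eq_zero_iff_right (neg_ne_zero.mpr hc), sub_eq_zero]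
    _ ↔ v = 0 ∧ sproj x w = 0 := sproj_eq_zero_and_eq_sproj_iff

end sproj

/-- Claim 3 of Theorem 1: characterization of the equilibrium points of the
closed-loop system `ẋ = P(x)v`, `v̇ = -c(v - ν(x)) + J(P(x)v)` on the unit
sphere: with `ν = P(x)w`, the stationarity equations hold iff `v = 0` and
`ν = 0`. -/
theorem equilibrium_characterization
    (n : ℕ)
    (x w v : EuclideanSpace ℝ (Fin (n+1)))
    (hx : ‖x‖ = 1)
    (c : ℝ) (hc : 0 < c)
    (J : EuclideanSpace ℝ (Fin (n+1)) →ₗ[ℝ] EuclideanSpace ℝ (Fin (n+1))) :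
    (sproj x v = 0 ∧ (-c) • (v - sproj x w) + J (sproj x v) = 0) ↔
      (v = 0 ∧ sproj x w = 0) :=
  equilibrium_characterization_general x w v hc.ne' (map_zero J)
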